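/- Let Y ∈ ℝ^{m×p}, 1 ≤ r ≤ m, and U ∈ H_{Y,r}. Then there exists δ > 0 such that for every X ∈ O_{m×r} with ‖X − U‖_F < δ, the problem of minimizing ‖Z − X‖_F² over Z ∈ H_{Y,r} has a unique solution. -/

import Mathlib

open Matrix BigOperators Filter

/-- The squared Frobenius norm of a real matrix. -/
def froSq {ι κ : Type*} [Fintype ι] [Fintype κ] (M : Matrix ι κ ℝ) : ℝ :=
  ∑ i, ∑ j, (M i j) ^ 2

/-- The Frobenius norm of a real matrix. -/
noncomputable def fro {ι κ : Type*} [Fintype ι] [Fintype κ] (M : Matrix ι κ ℝ) : ℝ :=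
  Real.sqrt (froSq M)

/-- The eigenvalues of `Y * Yᴴ`, sorted in descending order. -/
noncomputable def eigList {m : ℕ} {κ : Type*} [Fintype κ] (Y : Matrix (Fin m) κ ℝ) : List ℝ :=
  ((((Finset.univ : Finset (Fin m)).val.map
      (fun j => (Matrix.isHermitian_mul_conjTranspose_self Y).eigenvalues j)).sort (· ≤ ·)).reverse)

/-- The `i`-th largest singular value (1-indexed) of a real matrix, with the
convention that it is `0` beyond the smaller matrix dimension. -/
noncomputable def sval {m : ℕ} {κ : Type*} [Fintype κ] (Y : Matrix (Fin m) κ ℝ) (i : ℕ) : ℝ :=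
  Real.sqrt ((eigList Y).getD (i - 1) 0)

/-- The set of `m × r` real matrices with orthonormal columns. -/
def Stiefel (m r : ℕ) : Set (Matrix (Fin m) (Fin r) ℝ) :=
  {Z | Zᵀ * Z = 1}

/-- `H_{Y,r}`: the set of maximizers of `‖Zᵀ Y‖_F²` over the Stiefel manifold. -/
def HSet {m p : ℕ} (Y : Matrix (Fin m) (Fin p) ℝ) (r : ℕ) : Set (Matrix (Fin m) (Fin r) ℝ) :=
  {Z | Z ∈ Stiefel m r ∧ ∀ W ∈ Stiefel m r, froSq (Wᵀ * Y) ≤ froSq (Zᵀ * Y)}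

/-- The nuclear norm: the sum of all singular values. -/
noncomputable def nuclearNorm {a b : ℕ} (M : Matrix (Fin a) (Fin b) ℝ) : ℝ :=
  ∑ i ∈ Finset.range (min a b), sval M (i + 1)

/-- `U` maximizes `‖Uᵀ X‖_*` over `H_{Y,r}`. -/
def NucMax {m p r : ℕ} (Y : Matrix (Fin m) (Fin p) ℝ) (X U : Matrix (Fin m) (Fin r) ℝ) : Prop :=
  U ∈ HSet Y r ∧ ∀ V ∈ HSet Y r, nuclearNorm (Vᵀ * X) ≤ nuclearNorm (Uᵀ * X)

/-- The uniqueness conditions for `(Y, r)` at `X`. -/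
def UniqCond {m p : ℕ} (Y : Matrix (Fin m) (Fin p) ℝ) (r : ℕ)
    (X : Matrix (Fin m) (Fin r) ℝ) : Prop :=
  (∀ U, NucMax Y X U → (Uᵀ * X).det ≠ 0) ∧
  (∀ U₁ U₂, NucMax Y X U₁ → NucMax Y X U₂ → U₁ * U₁ᵀ = U₂ * U₂ᵀ)

/-- `Z` is a minimizer of `‖Z − X‖_F²` over `H_{Y,r}`. -/
def IsProj {m p r : ℕ} (Y : Matrix (Fin m) (Fin p) ℝ) (X Z : Matrix (Fin m) (Fin r) ℝ) : Prop :=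
  Z ∈ HSet Y r ∧ ∀ W ∈ HSet Y r, froSq (Z - X) ≤ froSq (W - X)

/-- The trace inner product of two matrices. -/
noncomputable def tinner {a b : ℕ} (A B : Matrix (Fin a) (Fin b) ℝ) : ℝ :=
  Matrix.trace (Aᵀ * B)

/-!
A point `Z` of a set in a Euclidean space which is nearest to `X` has `X - Z` orthogonal to the
velocity at `Z` of every curve in the set. If each point `V` of the set differs from `Z` by such a
velocity, up to an error `c ‖V - Z‖²`, then expanding `‖V - X‖²` around `Z` shows that no other
point is as near to `X`, as long as `2 c ‖X - Z‖ < 1` (the set has reach at least `1 / (2 c)`).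

For `H_{Y,r}` two kinds of curves are available: `exp (t S) Z` with `S` skew and commuting with
`Y Yᵀ`, and `Z exp (t K)` with `K` skew. The maximality of `Z` and `V` forces the projections `Z Zᵀ`
and `V Vᵀ` to commute with `Y Yᵀ`, hence so does the skew matrix `S = V Vᵀ Z Zᵀ - Z Zᵀ V Vᵀ`. With
`K = (Zᵀ V - Vᵀ Z) / 2`, the velocity `S Z + Z K` approximates `V - Z` up to `3 / 2 ‖V - Z‖²`. So
the reach is at least `1 / 3`, whatever `Y` and `r` are.
-/

open scoped InnerProductSpace Matrix.Norms.Frobenius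

section NearestPoint

variable {E : Type*} [NormedAddCommGroup E] [InnerProductSpace ℝ E]

theorem inner_eq_zero_of_isMinOn_norm_sub {s : Set E} {x z v : E} {γ : ℝ → E}
    (hz : IsMinOn (fun w => ‖w - x‖) s z) (hγs : ∀ t, γ t ∈ s) (hγz : γ 0 = z)
    (hγ : HasDerivAt γ v 0) : ⟪x - z, v⟫_ℝ = 0 := by
  have hmin : IsLocalMin (fun t => ‖γ t - x‖ ^ 2) 0 := Eventually.of_forall fun t => by
    have hle : ‖γ 0 - x‖ ≤ ‖γ t - x‖ := hγz ▸ isMinOn_iff.1 hz (γ t) (hγs t)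
    exact pow_le_pow_left₀ (norm_nonneg _) hle 2
  have hderiv := hmin.hasDerivAt_eq_zero (hγ.sub_const x).norm_sq
  rw [hγz] at hderiv
  rw [← neg_sub z x, inner_neg_left]
  linarith

theorem eq_of_norm_sub_le_of_inner_eq_zero {x z w v : E} {c : ℝ} (hle : ‖w - x‖ ≤ ‖z - x‖)
    (hv : ⟪x - z, v⟫_ℝ = 0) (hwv : ‖w - z - v‖ ≤ c * ‖w - z‖ ^ 2) (hc : 2 * c * ‖x - z‖ < 1) :
    w = z := by
  have hexpand : ‖w - x‖ ^ 2 = ‖w - z‖ ^ 2 - 2 * ⟪x - z, w - z⟫_ℝ + ‖z - x‖ ^ 2 := by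
    rw [← sub_sub_sub_cancel_right w x z, norm_sub_sq_real, real_inner_comm, norm_sub_rev x z]
  have hbound : ‖w - z‖ ^ 2 ≤ 2 * c * ‖x - z‖ * ‖w - z‖ ^ 2 :=
    calc ‖w - z‖ ^ 2 ≤ 2 * ⟪x - z, w - z⟫_ℝ := by
          have := pow_le_pow_left₀ (norm_nonneg _) hle 2
          linarith
      _ = 2 * ⟪x - z, w - z - v⟫_ℝ := by rw [inner_sub_right _ _ v, hv, sub_zero]
      _ ≤ 2 * (‖x - z‖ * (c * ‖w - z‖ ^ 2)) := by
          gcongr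
          exact (real_inner_le_norm _ _).trans (by gcongr)
      _ = 2 * c * ‖x - z‖ * ‖w - z‖ ^ 2 := by ring
  have hzero : ‖w - z‖ ^ 2 = 0 := by nlinarith [sq_nonneg ‖w - z‖]
  exact sub_eq_zero.1 (norm_eq_zero.1 (pow_eq_zero_iff two_ne_zero |>.1 hzero))

end NearestPoint

section Frobenius

variable {ι κ : Type*} [Fintype ι] [Fintype κ]

theorem froSq_eq_norm_sq (M : Matrix ι κ ℝ) : froSq M = ‖M‖ ^ 2 := by
  rw [frobenius_norm_def, ← Real.sqrt_eq_rpow, Real.sq_sqrt (by positivity)]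
  simp [froSq]

theorem fro_eq_norm (M : Matrix ι κ ℝ) : fro M = ‖M‖ := by
  rw [fro, froSq_eq_norm_sq, Real.sqrt_sq (norm_nonneg M)]

theorem froSq_eq_trace (M : Matrix ι κ ℝ) : froSq M = trace (Mᵀ * M) := by
  rw [froSq, Finset.sum_comm]
  simp only [trace, diag, mul_apply, transpose_apply, sq]

end Frobenius

/-- The trace inner product `⟪A, B⟫ = trace (Aᵀ * B)` on real matrices, whose norm is Mathlib's
Frobenius norm. It is a local instance, as matrices carry no global norm. -/
@[reducible]
noncomputable def frobeniusInnerProductSpace {ι κ : Type*} [Fintype ι] [Fintype κ] :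
    InnerProductSpace ℝ (Matrix ι κ ℝ) where
  inner A B := trace (Aᵀ * B)
  norm_sq_eq_re_inner A := by
    rw [← froSq_eq_norm_sq, froSq_eq_trace]
    rfl
  conj_inner_symm A B := by
    rw [conj_trivial, ← trace_transpose, transpose_mul, transpose_transpose]
  add_left A B C := by rw [transpose_add, Matrix.add_mul, trace_add]
  smul_left A B c := by
    rw [transpose_smul, Matrix.smul_mul, trace_smul, conj_trivial, smul_eq_mul]

attribute [local instance] frobeniusInnerProductSpace

section TraceInner

variable {ι κ l : Type*} [Fintype ι] [Fintype κ] [Fintype l]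

theorem inner_eq_trace (A B : Matrix ι κ ℝ) : ⟪A, B⟫_ℝ = trace (Aᵀ * B) := rfl

theorem inner_mul_left_eq (A : Matrix ι κ ℝ) (B : Matrix κ l ℝ) (C : Matrix ι l ℝ) :
    ⟪A * B, C⟫_ℝ = ⟪B, Aᵀ * C⟫_ℝ := by
  simp only [inner_eq_trace, transpose_mul, Matrix.mul_assoc]

variable [DecidableEq κ]

theorem norm_mul_of_transpose_mul_self_eq_one {Q : Matrix ι κ ℝ} (hQ : Qᵀ * Q = 1)
    (M : Matrix κ l ℝ) : ‖Q * M‖ = ‖M‖ := by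
  rw [← sq_eq_sq₀ (norm_nonneg _) (norm_nonneg _), ← real_inner_self_eq_norm_sq,
    ← real_inner_self_eq_norm_sq, inner_mul_left_eq, ← Matrix.mul_assoc, hQ, Matrix.one_mul]

theorem norm_sub_mul_transpose_mul_sq {Q : Matrix ι κ ℝ} (hQ : Qᵀ * Q = 1) (M : Matrix ι l ℝ) :
    ‖M - Q * (Qᵀ * M)‖ ^ 2 = ‖M‖ ^ 2 - ‖Qᵀ * M‖ ^ 2 := by
  rw [norm_sub_sq_real, norm_mul_of_transpose_mul_self_eq_one hQ, real_inner_comm,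
    inner_mul_left_eq, real_inner_self_eq_norm_sq]
  ring

theorem norm_sub_mul_transpose_mul_le {Q : Matrix ι κ ℝ} (hQ : Qᵀ * Q = 1) (M : Matrix ι l ℝ) :
    ‖M - Q * (Qᵀ * M)‖ ≤ ‖M‖ := by
  rw [← sq_le_sq₀ (norm_nonneg _) (norm_nonneg _), norm_sub_mul_transpose_mul_sq hQ]
  exact sub_le_self _ (sq_nonneg _)

theorem norm_mul_le_of_transpose_mul_self_eq_one {Q : Matrix ι κ ℝ} (hQ : Qᵀ * Q = 1)
    (M : Matrix l ι ℝ) : ‖M * Q‖ ≤ ‖M‖ := by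
  rw [← frobenius_norm_transpose, ← frobenius_norm_transpose M, transpose_mul,
    ← sq_le_sq₀ (norm_nonneg _) (norm_nonneg _), ← sub_nonneg,
    ← norm_sub_mul_transpose_mul_sq hQ]
  exact sq_nonneg _

theorem norm_sq_of_transpose_mul_self_eq_one {Q : Matrix ι κ ℝ} (hQ : Qᵀ * Q = 1) :
    ‖Q‖ ^ 2 = Fintype.card κ := by
  rw [← froSq_eq_norm_sq, froSq_eq_trace, hQ, trace_one]

end TraceInner

section SkewSymmetric

variable {κ : Type*} [Fintype κ]

theorem commute_of_forall_trace_skew_mul_eq_zero {P A : Matrix κ κ ℝ} (hP : Pᵀ = P) (hA : Aᵀ = A)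
    (h : ∀ S : Matrix κ κ ℝ, Sᵀ = -S → trace (S * (P * A)) = 0) : Commute P A := by
  set S := P * A - A * P with hS_def
  have hS : Sᵀ = -S := by
    simp only [hS_def, transpose_sub, transpose_mul, hP, hA, neg_sub]
  have hSAP : trace (S * (A * P)) = 0 := by
    rw [← trace_transpose, transpose_mul, transpose_mul, hP, hA, hS, Matrix.mul_neg, trace_neg,
      trace_mul_comm, h S hS, neg_zero]
  have hinner : ⟪S, S⟫_ℝ = 0 := by
    rw [inner_eq_trace, hS, Matrix.neg_mul, trace_neg]
    nth_rw 2 [hS_def]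
    rw [Matrix.mul_sub, trace_sub, h S hS, hSAP, sub_zero, neg_zero]
  exact sub_eq_zero.1 (inner_self_eq_zero.1 hinner)

variable [DecidableEq κ]

theorem exp_smul_mem_orthogonalGroup {S : Matrix κ κ ℝ} (hS : Sᵀ = -S) (t : ℝ) :
    NormedSpace.exp (t • S) ∈ orthogonalGroup κ ℝ := by
  have hmem : S ∈ skewAdjoint (Matrix κ κ ℝ) := by
    rw [skewAdjoint.mem_iff, star_eq_conjTranspose, conjTranspose_eq_transpose_of_trivial, hS]
  exact NormedSpace.exp_mem_unitary_of_mem_skewAdjoint (skewAdjoint.smul_mem t hmem)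

theorem hasDerivAt_linearMap_exp_smul_zero {F : Type*} [NormedAddCommGroup F] [NormedSpace ℝ F]
    (L : Matrix κ κ ℝ →ₗ[ℝ] F) (S : Matrix κ κ ℝ) :
    HasDerivAt (fun t : ℝ => L (NormedSpace.exp (t • S))) (L S) 0 := by
  have hexp : HasDerivAt (fun t : ℝ => NormedSpace.exp (t • S)) S 0 := by
    have h := hasDerivAt_exp_smul_const (𝕂 := ℝ) S (0 : ℝ)
    rw [zero_smul, NormedSpace.exp_zero, one_mul] at h
    exact h
  exact L.toContinuousLinearMap.hasFDerivAt.comp_hasDerivAt 0 hexp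

end SkewSymmetric

section TangentApprox

variable {ι κ : Type*} [Fintype ι] [Fintype κ]

/-- The first-order approximation of `V - Z` obtained by moving `Z` along the rotations generated by
the skew matrices `V Vᵀ Z Zᵀ - Z Zᵀ V Vᵀ` on the left and `(Zᵀ V - Vᵀ Z) / 2` on the right. -/
noncomputable def tangentApprox (Z V : Matrix ι κ ℝ) : Matrix ι κ ℝ :=
  (V * Vᵀ * (Z * Zᵀ) - Z * Zᵀ * (V * Vᵀ)) * Z + (1 / 2 : ℝ) • (Z * (Zᵀ * V - Vᵀ * Z))

variable [DecidableEq κ] {Z V : Matrix ι κ ℝ}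

theorem sub_sub_tangentApprox (hZ : Zᵀ * Z = 1) (hV : Vᵀ * V = 1) :
    V - Z - tangentApprox Z V =
      -((V - Z) * (V - Z)ᵀ * Z - Z * (Zᵀ * ((V - Z) * (V - Z)ᵀ * Z))) -
        (1 / 2 : ℝ) • (Z * ((V - Z)ᵀ * (V - Z))) := by
  have hZB (B : Matrix κ κ ℝ) : Zᵀ * (Z * B) = B := by
    rw [← Matrix.mul_assoc, hZ, Matrix.one_mul]
  simp only [tangentApprox, transpose_sub, Matrix.sub_mul, Matrix.mul_sub, Matrix.mul_assoc, hZ, hV,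
    hZB, Matrix.mul_one]
  module

theorem norm_sub_sub_tangentApprox_le (hZ : Zᵀ * Z = 1) (hV : Vᵀ * V = 1) :
    ‖V - Z - tangentApprox Z V‖ ≤ 3 / 2 * ‖V - Z‖ ^ 2 := by
  set D := V - Z
  have hnormal : ‖D * Dᵀ * Z - Z * (Zᵀ * (D * Dᵀ * Z))‖ ≤ ‖D‖ ^ 2 :=
    calc ‖D * Dᵀ * Z - Z * (Zᵀ * (D * Dᵀ * Z))‖ ≤ ‖D * Dᵀ * Z‖ :=
          norm_sub_mul_transpose_mul_le hZ _
      _ ≤ ‖D * Dᵀ‖ := norm_mul_le_of_transpose_mul_self_eq_one hZ _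
      _ ≤ ‖D‖ * ‖Dᵀ‖ := frobenius_norm_mul _ _
      _ = ‖D‖ ^ 2 := by rw [frobenius_norm_transpose, sq]
  have htangent : ‖Z * (Dᵀ * D)‖ ≤ ‖D‖ ^ 2 :=
    calc ‖Z * (Dᵀ * D)‖ = ‖Dᵀ * D‖ := norm_mul_of_transpose_mul_self_eq_one hZ _
      _ ≤ ‖Dᵀ‖ * ‖D‖ := frobenius_norm_mul _ _
      _ = ‖D‖ ^ 2 := by rw [frobenius_norm_transpose, sq]
  calc ‖D - tangentApprox Z V‖
      = ‖-(D * Dᵀ * Z - Z * (Zᵀ * (D * Dᵀ * Z))) - (1 / 2 : ℝ) • (Z * (Dᵀ * D))‖ := by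
        rw [sub_sub_tangentApprox hZ hV]
    _ ≤ ‖D * Dᵀ * Z - Z * (Zᵀ * (D * Dᵀ * Z))‖ + 1 / 2 * ‖Z * (Dᵀ * D)‖ := by
        refine (norm_sub_le _ _).trans_eq ?_
        rw [norm_neg, norm_smul, Real.norm_of_nonneg (by norm_num)]
    _ ≤ ‖D‖ ^ 2 + 1 / 2 * ‖D‖ ^ 2 := by gcongr
    _ = 3 / 2 * ‖D‖ ^ 2 := by ring

end TangentApprox

section Maximizers

variable {m p r : ℕ} {Y : Matrix (Fin m) (Fin p) ℝ} {X V Z : Matrix (Fin m) (Fin r) ℝ}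

theorem mem_HSet_iff_norm :
    Z ∈ HSet Y r ↔ Z ∈ Stiefel m r ∧ ∀ W ∈ Stiefel m r, ‖Yᵀ * W‖ ≤ ‖Yᵀ * Z‖ := by
  have hfroSq (W : Matrix (Fin m) (Fin r) ℝ) : froSq (Wᵀ * Y) = ‖Yᵀ * W‖ ^ 2 := by
    rw [froSq_eq_norm_sq, ← frobenius_norm_transpose, transpose_mul, transpose_transpose]
  simp only [HSet, Set.mem_ofPred_eq, hfroSq, sq_le_sq₀ (norm_nonneg _) (norm_nonneg _)]

theorem isProj_iff_isMinOn :
    IsProj Y X Z ↔ Z ∈ HSet Y r ∧ IsMinOn (fun W => ‖W - X‖) (HSet Y r) Z := by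
  simp only [IsProj, isMinOn_iff, froSq_eq_norm_sq, sq_le_sq₀ (norm_nonneg _) (norm_nonneg _)]

theorem isCompact_Stiefel (m r : ℕ) : IsCompact (Stiefel m r) := by
  have : ProperSpace (Matrix (Fin m) (Fin r) ℝ) := FiniteDimensional.proper ℝ _
  refine Metric.isCompact_of_isClosed_isBounded
    (isClosed_eq (f := fun Z : Matrix (Fin m) (Fin r) ℝ => Zᵀ * Z) (by fun_prop)
      continuous_const) ?_
  refine isBounded_iff_forall_norm_le.2 ⟨√r, fun Z hZ => Real.le_sqrt_of_sq_le ?_⟩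
  rw [norm_sq_of_transpose_mul_self_eq_one hZ, Fintype.card_fin]

theorem isCompact_HSet (Y : Matrix (Fin m) (Fin p) ℝ) (r : ℕ) : IsCompact (HSet Y r) := by
  have hHSet : HSet Y r = Stiefel m r ∩ ⋂ W ∈ Stiefel m r, {Z | ‖Yᵀ * W‖ ≤ ‖Yᵀ * Z‖} := by
    ext Z
    simp only [mem_HSet_iff_norm, Set.mem_inter_iff, Set.mem_iInter, Set.mem_ofPred_eq]
  rw [hHSet]
  exact (isCompact_Stiefel m r).inter_right <|
    isClosed_biInter fun W _ => isClosed_le continuous_const (by fun_prop)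

theorem orthogonal_mul_mem_Stiefel {g : Matrix (Fin m) (Fin m) ℝ}
    (hg : g ∈ orthogonalGroup (Fin m) ℝ) (hZ : Z ∈ Stiefel m r) : g * Z ∈ Stiefel m r := by
  change (g * Z)ᵀ * (g * Z) = 1
  rw [transpose_mul, Matrix.mul_assoc, ← Matrix.mul_assoc gᵀ, (mem_orthogonalGroup_iff' _ _).1 hg,
    Matrix.one_mul, hZ]

theorem orthogonal_mul_mem_HSet {g : Matrix (Fin m) (Fin m) ℝ} (hg : g ∈ orthogonalGroup (Fin m) ℝ)
    (hgY : Commute g (Y * Yᵀ)) (hZ : Z ∈ HSet Y r) : g * Z ∈ HSet Y r := by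
  have hnorm : ‖Yᵀ * (g * Z)‖ = ‖Yᵀ * Z‖ := by
    rw [← sq_eq_sq₀ (norm_nonneg _) (norm_nonneg _), ← real_inner_self_eq_norm_sq,
      ← real_inner_self_eq_norm_sq]
    calc ⟪Yᵀ * (g * Z), Yᵀ * (g * Z)⟫_ℝ = ⟪Z, gᵀ * (Y * Yᵀ * g * Z)⟫_ℝ := by
          rw [inner_mul_left_eq, inner_mul_left_eq, transpose_transpose]
          simp only [Matrix.mul_assoc]
      _ = ⟪Z, gᵀ * g * (Y * Yᵀ * Z)⟫_ℝ := by
          rw [← hgY.eq]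
          simp only [Matrix.mul_assoc]
      _ = ⟪Yᵀ * Z, Yᵀ * Z⟫_ℝ := by
          rw [(mem_orthogonalGroup_iff' _ _).1 hg, Matrix.one_mul, inner_mul_left_eq,
            transpose_transpose, Matrix.mul_assoc]
  rw [mem_HSet_iff_norm] at hZ ⊢
  exact ⟨orthogonal_mul_mem_Stiefel hg hZ.1, fun W hW => (hZ.2 W hW).trans_eq hnorm.symm⟩

theorem mul_orthogonal_mem_HSet {h : Matrix (Fin r) (Fin r) ℝ} (hh : h ∈ orthogonalGroup (Fin r) ℝ)
    (hZ : Z ∈ HSet Y r) : Z * h ∈ HSet Y r := by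
  rw [mem_HSet_iff_norm] at hZ ⊢
  have hstiefel : (Z * h)ᵀ * (Z * h) = 1 := by
    rw [transpose_mul, Matrix.mul_assoc, ← Matrix.mul_assoc Zᵀ, hZ.1, Matrix.one_mul,
      (mem_orthogonalGroup_iff' _ _).1 hh]
  have hnorm : ‖Yᵀ * (Z * h)‖ = ‖Yᵀ * Z‖ := by
    rw [← frobenius_norm_transpose, ← Matrix.mul_assoc, transpose_mul,
      norm_mul_of_transpose_mul_self_eq_one, frobenius_norm_transpose]
    rw [transpose_transpose, (mem_orthogonalGroup_iff _ _).1 hh]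
  exact ⟨hstiefel, fun W hW => (hZ.2 W hW).trans_eq hnorm.symm⟩

theorem inner_transpose_mul_skew_mul_eq_zero (hZ : Z ∈ HSet Y r) {S : Matrix (Fin m) (Fin m) ℝ}
    (hS : Sᵀ = -S) : ⟪Yᵀ * Z, Yᵀ * (S * Z)⟫_ℝ = 0 := by
  rw [mem_HSet_iff_norm] at hZ
  let L : Matrix (Fin m) (Fin m) ℝ →ₗ[ℝ] Matrix (Fin p) (Fin r) ℝ :=
    mulLeftLinearMap (Fin r) ℝ Yᵀ ∘ₗ mulRightLinearMap (Fin m) ℝ Z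
  have hL (g : Matrix (Fin m) (Fin m) ℝ) : L g = Yᵀ * (g * Z) := rfl
  have hL_zero : L (NormedSpace.exp ((0 : ℝ) • S)) = Yᵀ * Z := by
    rw [zero_smul, NormedSpace.exp_zero, hL, Matrix.one_mul]
  have hmax : IsLocalMax (fun t : ℝ => ‖L (NormedSpace.exp (t • S))‖ ^ 2) 0 :=
    Eventually.of_forall fun t => by
      have hle : ‖Yᵀ * (NormedSpace.exp (t • S) * Z)‖ ≤ ‖Yᵀ * Z‖ :=
        hZ.2 _ (orthogonal_mul_mem_Stiefel (exp_smul_mem_orthogonalGroup hS t) hZ.1)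
      simpa only [hL_zero, hL] using pow_le_pow_left₀ (norm_nonneg _) hle 2
  have hderiv := hmax.hasDerivAt_eq_zero (hasDerivAt_linearMap_exp_smul_zero L S).norm_sq
  rw [hL_zero, hL] at hderiv
  linarith

theorem commute_mul_transpose_of_mem_HSet (hZ : Z ∈ HSet Y r) : Commute (Z * Zᵀ) (Y * Yᵀ) := by
  refine commute_of_forall_trace_skew_mul_eq_zero (by rw [transpose_mul, transpose_transpose])
    (by rw [transpose_mul, transpose_transpose]) fun S hS => ?_
  calc trace (S * (Z * Zᵀ * (Y * Yᵀ))) = trace (Zᵀ * Y * (Yᵀ * (S * Z))) := by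
        rw [Matrix.mul_assoc Z, ← Matrix.mul_assoc S, trace_mul_comm]
        simp only [Matrix.mul_assoc]
    _ = ⟪Yᵀ * Z, Yᵀ * (S * Z)⟫_ℝ := by
        rw [inner_eq_trace, transpose_mul, transpose_transpose]
    _ = 0 := inner_transpose_mul_skew_mul_eq_zero hZ hS

theorem IsProj.inner_skew_mul_eq_zero (hZ : IsProj Y X Z) {S : Matrix (Fin m) (Fin m) ℝ}
    (hS : Sᵀ = -S) (hSY : Commute S (Y * Yᵀ)) : ⟪X - Z, S * Z⟫_ℝ = 0 := by
  rw [isProj_iff_isMinOn] at hZ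
  exact inner_eq_zero_of_isMinOn_norm_sub hZ.2
    (fun t => orthogonal_mul_mem_HSet (exp_smul_mem_orthogonalGroup hS t)
      (hSY.smul_left t).exp_left hZ.1)
    (by rw [zero_smul, NormedSpace.exp_zero, Matrix.one_mul])
    (hasDerivAt_linearMap_exp_smul_zero (mulRightLinearMap (Fin m) ℝ Z) S)

theorem IsProj.inner_mul_skew_eq_zero (hZ : IsProj Y X Z) {K : Matrix (Fin r) (Fin r) ℝ}
    (hK : Kᵀ = -K) : ⟪X - Z, Z * K⟫_ℝ = 0 := by
  rw [isProj_iff_isMinOn] at hZ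
  exact inner_eq_zero_of_isMinOn_norm_sub hZ.2
    (fun t => mul_orthogonal_mem_HSet (exp_smul_mem_orthogonalGroup hK t) hZ.1)
    (by rw [zero_smul, NormedSpace.exp_zero, Matrix.mul_one])
    (hasDerivAt_linearMap_exp_smul_zero (mulLeftLinearMap (Fin r) ℝ Z) K)

theorem IsProj.inner_tangentApprox_eq_zero (hZ : IsProj Y X Z) (hV : V ∈ HSet Y r) :
    ⟪X - Z, tangentApprox Z V⟫_ℝ = 0 := by
  have hZY := commute_mul_transpose_of_mem_HSet hZ.1
  have hVY := commute_mul_transpose_of_mem_HSet hV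
  have hleft := hZ.inner_skew_mul_eq_zero (S := V * Vᵀ * (Z * Zᵀ) - Z * Zᵀ * (V * Vᵀ))
    (by simp only [transpose_sub, transpose_mul, transpose_transpose, neg_sub])
    ((hVY.mul_left hZY).sub_left (hZY.mul_left hVY))
  have hright := hZ.inner_mul_skew_eq_zero (K := Zᵀ * V - Vᵀ * Z)
    (by simp only [transpose_sub, transpose_mul, transpose_transpose, neg_sub])
  rw [tangentApprox, inner_add_right, real_inner_smul_right, hleft, hright, mul_zero, add_zero]

theorem IsProj.eq_of_norm_sub_lt (hZ : IsProj Y X Z) (hV : IsProj Y X V) (hXZ : ‖X - Z‖ < 1 / 3) :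
    V = Z :=
  eq_of_norm_sub_le_of_inner_eq_zero ((isProj_iff_isMinOn.1 hV).2 hZ.1)
    (hZ.inner_tangentApprox_eq_zero hV.1) (norm_sub_sub_tangentApprox_le hZ.1.1 hV.1.1)
    (by linarith)

theorem exists_isProj (hY : (HSet Y r).Nonempty) (X : Matrix (Fin m) (Fin r) ℝ) :
    ∃ Z, IsProj Y X Z := by
  obtain ⟨Z, hZ, hmin⟩ := (isCompact_HSet Y r).exists_isMinOn hY
    (f := fun W => ‖W - X‖) (by fun_prop)
  exact ⟨Z, isProj_iff_isMinOn.2 ⟨hZ, hmin⟩⟩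

end Maximizers

theorem stmt3_general {m p r : ℕ} {Y : Matrix (Fin m) (Fin p) ℝ} {X U : Matrix (Fin m) (Fin r) ℝ}
    (hU : U ∈ HSet Y r) (hXU : fro (X - U) < 1 / 3) :
    ∃! Z : Matrix (Fin m) (Fin r) ℝ, IsProj Y X Z := by
  obtain ⟨Z, hZ⟩ := exists_isProj ⟨U, hU⟩ X
  have hle : ‖Z - X‖ ≤ ‖U - X‖ := (isProj_iff_isMinOn.1 hZ).2 hU
  have hlt : ‖X - Z‖ < 1 / 3 := by
    rw [fro_eq_norm, norm_sub_rev] at hXU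
    rw [norm_sub_rev]
    exact hle.trans_lt hXU
  exact ⟨Z, hZ, fun V hV => hZ.eq_of_norm_sub_lt hV hlt⟩

/-- For every `U ∈ H_{Y,r}` there is `δ > 0` such that for every
`X ∈ O_{m×r}` with `‖X − U‖_F < δ`, the problem of minimizing `‖Z − X‖_F²`
over `H_{Y,r}` has a unique solution. -/
theorem stmt3 {m p r : ℕ} (hr1 : 1 ≤ r) (hrm : r ≤ m)
    (Y : Matrix (Fin m) (Fin p) ℝ)
    (U : Matrix (Fin m) (Fin r) ℝ) (hU : U ∈ HSet Y r) :
    ∃ δ > (0 : ℝ), ∀ X ∈ Stiefel m r, fro (X - U) < δ →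
      ∃! Z : Matrix (Fin m) (Fin r) ℝ, IsProj Y X Z :=
  ⟨1 / 3, by norm_num, fun X _ hXU => stmt3_general hU hXU⟩
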